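/- arXiv:0903.2566 — 14 statements merged into one kernel-verified Lean document; each statement's English description precedes it below -/
import Mathlib

section
/- Let A be a commutative reduced ring and let x₁,…,xₙ ∈ A. Then every element of A is a convex combination of x₁,…,xₙ (i.e., for every x ∈ A there exists a complete family of orthogonal idempotents a₁,…,aₙ of A with x = a₁x₁ + ⋯ + aₙxₙ) if and only if ∏ᵢ₌₁ⁿ (x − xᵢ) = 0 for every x ∈ A. -/
/-- A complete family of orthogonal idempotents (c.f.o.i.) of a commutative ring. -/
def IsCFOI {A : Type*} [CommRing A] {n : ℕ} (a : Fin n → A) : Prop :=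
  (∀ i, IsIdempotentElem (a i)) ∧ (∀ i j, i ≠ j → a i * a j = 0) ∧ ∑ i, a i = 1

theorem aux_field {K : Type*} [Field K] [Fintype K] (n : ℕ) (h : Fintype.card K ≤ n) (y : K) :
    y ^ (n.factorial + 1) = y := by
  by_cases hy : y = 0
  · simp [hy]
  · have h1 := FiniteField.pow_card_sub_one_eq_one y hy
    have h2 : Fintype.card K - 1 ∣ n.factorial := by
      apply Nat.dvd_factorial
      · have := Fintype.one_lt_card (α := K)
        omega
      · omega
    obtain ⟨k, hk⟩ := h2
    rw [pow_succ, hk, pow_mul, h1, one_pow, one_mul]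

theorem aux_domain {K : Type*} [CommRing K] [IsDomain K] (n : ℕ) (x : Fin n → K)
    (hx : Function.Surjective x) (y : K) :
    y ^ (n.factorial + 1) = y := by
  classical
  have : Finite K := Finite.of_surjective x hx
  have := Fintype.ofFinite K
  have hc : Fintype.card K ≤ n := by
    simpa using Fintype.card_le_of_surjective x hx
  let _ : Field K := (Finite.isField_of_domain K).toField
  exact aux_field n hc y

theorem aux_ring {A : Type*} [CommRing A] [IsReduced A] (n : ℕ) (x : Fin n → A)
    (h : ∀ y : A, ∏ i, (y - x i) = 0) (y : A) : y ^ (n.factorial + 1) = y := by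
  rw [← sub_eq_zero]
  apply IsNilpotent.eq_zero
  rw [← mem_nilradical, nilradical_eq_sInf, Ideal.mem_sInf]
  intro P hP
  have hP : P.IsPrime := hP
  rw [← Ideal.Quotient.eq_zero_iff_mem, map_sub, map_pow, sub_eq_zero]
  apply aux_domain n (fun i => Ideal.Quotient.mk P (x i))
  intro z
  obtain ⟨z, rfl⟩ := Ideal.Quotient.mk_surjective z
  have hz := congrArg (Ideal.Quotient.mk P) (h z)
  rw [map_prod, map_zero, Finset.prod_eq_zero_iff] at hz
  obtain ⟨i, -, hi⟩ := hz
  rw [map_sub, sub_eq_zero] at hi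
  exact ⟨i, hi.symm⟩

theorem stmt_0 (A : Type*) [CommRing A] [IsReduced A] (n : ℕ) (x : Fin n → A) :
    (∀ y : A, ∃ a : Fin n → A, IsCFOI a ∧ y = ∑ i, a i * x i) ↔
      (∀ y : A, ∏ i, (y - x i) = 0) := by
  constructor
  · intro h y
    obtain ⟨a, ⟨hi, ho, hs⟩, hy⟩ := h y
    have key : ∀ j, a j * (y - x j) = 0 := by
      intro j
      have : a j * y = a j * x j := by
        rw [hy, Finset.mul_sum, Finset.sum_eq_single j]
        · rw [← mul_assoc, (hi j).eq]
        · intro b _ hb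
          rw [← mul_assoc, ho j b hb.symm, zero_mul]
        · simp
      rw [mul_sub, this, sub_self]
    rw [← one_mul (∏ i, (y - x i)), ← hs, Finset.sum_mul]
    apply Finset.sum_eq_zero
    intro j _
    rw [← Finset.mul_prod_erase _ _ (Finset.mem_univ j), ← mul_assoc, key, zero_mul]
  · intro h y
    have hp := aux_ring n x h
    have hN : n.factorial ≠ 0 := n.factorial_ne_zero
    generalize n.factorial = N at hp hN
    set c : Fin n → A := fun i => (y - x i) ^ N with hc
    have hcc : ∀ i, IsIdempotentElem (c i) := by
      intro i
      obtain ⟨M, rfl⟩ := Nat.exists_eq_succ_of_ne_zero hN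
      have := hp (y - x i)
      simp only [IsIdempotentElem, hc]
      calc (y - x i) ^ (M + 1) * (y - x i) ^ (M + 1)
          = (y - x i) ^ (M + 1 + 1) * (y - x i) ^ M := by ring
        _ = _ := by
          have h2 : (y - x i) ^ (M + 1 + 1) = y - x i := this
          rw [h2, Nat.succ_eq_add_one]; ring
    have hck : ∀ i, (1 - c i) * (y - x i) = 0 := by
      intro i
      have := hp (y - x i)
      rw [pow_succ] at this
      rw [sub_mul, one_mul, this, sub_self]
    set a : Fin n → A := fun i => (1 - c i) * ∏ j ∈ Finset.univ with j < i, c j with ha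
    have hsum : ∑ i, a i = 1 := by
      have := Finset.prod_one_sub_ordered Finset.univ (fun i => 1 - c i)
      simp only [sub_sub_cancel] at this
      have h0 : ∏ i, c i = 0 := by
        rw [hc, Finset.prod_pow, h, zero_pow hN]
      rw [h0] at this
      exact (sub_eq_zero.mp this.symm).symm
    have hlt : ∀ i j, i < j → a i * a j = 0 := by
      intro i j hij
      have hm : i ∈ Finset.univ.filter (fun k => k < j) := by simp [hij]
      simp only [ha]
      rw [← Finset.mul_prod_erase _ _ hm]
      have := (hcc i).eq
      generalize ∏ k ∈ _, c k = P
      generalize ∏ k ∈ _, c k = Q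
      linear_combination (-(1 - c j) * P * Q) * this
    have horth : ∀ i j, i ≠ j → a i * a j = 0 := by
      intro i j hij
      rcases lt_or_gt_of_ne hij with h1 | h1
      · exact hlt i j h1
      · rw [mul_comm]; exact hlt j i h1
    refine ⟨a, ⟨?_, horth, hsum⟩, ?_⟩
    · intro i
      have : a i * ∑ j, a j = a i := by rw [hsum, mul_one]
      rw [Finset.mul_sum, Finset.sum_eq_single i] at this
      · exact this
      · intro b _ hb
        exact horth i b hb.symm
      · simp
    · conv_lhs => rw [← one_mul y, ← hsum, Finset.sum_mul]
      apply Finset.sum_congr rfl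
      intro i _
      simp only [ha]
      linear_combination (∏ j ∈ Finset.univ with j < i, c j) * hck i
end

section
/- Every CFG-ring is von Neumann regular: if A is a commutative reduced ring and there exist x₁,…,xₙ ∈ A with ∏ᵢ₌₁ⁿ (x − xᵢ) = 0 for all x ∈ A, then for every a ∈ A there exists b ∈ A with a = a²b. -/
theorem stmt_2 (A : Type*) [CommRing A] [IsReduced A] (n : ℕ) (x : Fin n → A)
    (hCFG : ∀ y : A, ∏ i, (y - x i) = 0) :
    ∀ a : A, ∃ b : A, a = a ^ 2 * b := by
  classical
  intro a
  have key : a ^ (n.factorial + 1) - a = 0 := by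
    apply IsNilpotent.eq_zero
    rw [nilpotent_iff_mem_prime]
    intro J hJ
    have hs : Function.Surjective (fun i => Ideal.Quotient.mk J (x i)) := by
      intro z
      obtain ⟨y, rfl⟩ := Ideal.Quotient.mk_surjective z
      have h := congrArg (Ideal.Quotient.mk J) (hCFG y)
      rw [map_prod, map_zero, Finset.prod_eq_zero_iff] at h
      obtain ⟨i, -, hi⟩ := h
      rw [map_sub, sub_eq_zero] at hi
      exact ⟨i, hi.symm⟩
    haveI : Fintype (A ⧸ J) := Fintype.ofSurjective _ hs
    have hcard : Fintype.card (A ⧸ J) ≤ n := by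
      simpa using Fintype.card_le_of_surjective _ hs
    letI : Field (A ⧸ J) := Fintype.fieldOfDomain _
    rw [← Ideal.Quotient.eq_zero_iff_mem, map_sub, map_pow, sub_eq_zero]
    generalize (Ideal.Quotient.mk J) a = z
    by_cases hz : z = 0
    · simp [hz]
    · have h1 := FiniteField.pow_card_sub_one_eq_one z hz
      have h2 : 1 < Fintype.card (A ⧸ J) := Fintype.one_lt_card
      obtain ⟨k, hk⟩ : Fintype.card (A ⧸ J) - 1 ∣ n.factorial :=
        Nat.dvd_factorial (by omega) (by omega)
      rw [hk, pow_succ, pow_mul, h1, one_pow, one_mul]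
  refine ⟨a ^ (n.factorial - 1), ?_⟩
  have := n.factorial_pos
  rw [← pow_add, show 2 + (n.factorial - 1) = n.factorial + 1 by omega]
  exact (sub_eq_zero.mp key).symm
end

section
/- Let K be a field and let A be a commutative von Neumann regular K-algebra such that every element of A is a convex combination of elements of (the image in A of) K. Then A is isomorphic as a K-algebra to the ring of locally constant functions from the Zariski prime spectrum Spec(A) to K (where K carries the discrete topology), with pointwise operations. -/
theorem stmt_3 (K : Type*) [Field K] (A : Type*) [CommRing A] [Algebra K A]
    (hreg : ∀ a : A, ∃ b : A, a = a ^ 2 * b)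
    (hconv : ∀ y : A, ∃ (n : ℕ) (a : Fin n → A) (k : Fin n → K),
      IsCFOI a ∧ y = ∑ i, a i * algebraMap K A (k i)) :
    Nonempty (A ≃ₐ[K] LocallyConstant (PrimeSpectrum A) K) := by
  classical
  have key : ∀ (y : A) (p : PrimeSpectrum A), ∃ U : Set (PrimeSpectrum A), IsOpen U ∧ p ∈ U ∧
      ∃ k : K, ∀ q ∈ U, y - algebraMap K A k ∈ q.asIdeal := by
    intro y p
    obtain ⟨n, a, k, ⟨hid, horth, hsum⟩, hy⟩ := hconv y
    obtain ⟨i, hi⟩ : ∃ i, a i ∉ p.asIdeal := by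
      by_contra! h
      apply p.2.ne_top
      rw [Ideal.eq_top_iff_one, ← hsum]
      exact Ideal.sum_mem _ fun i _ => h i
    refine ⟨PrimeSpectrum.basicOpen (a i), (PrimeSpectrum.basicOpen (a i)).2, hi, k i, ?_⟩
    intro q hq
    have h0 : a i * (y - algebraMap K A (k i)) = 0 := by
      rw [mul_sub, hy, Finset.mul_sum, Finset.sum_eq_single i]
      · rw [← mul_assoc, (hid i).eq, sub_self]
      · intro j _ hj
        rw [← mul_assoc, horth i j hj.symm, zero_mul]
      · simp
    have h1 : a i * (y - algebraMap K A (k i)) ∈ q.asIdeal := by rw [h0]; exact zero_mem _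
    exact (q.2.mem_or_mem h1).resolve_left hq
  have uniq : ∀ (p : PrimeSpectrum A) (y : A) (k l : K), y - algebraMap K A k ∈ p.asIdeal →
      y - algebraMap K A l ∈ p.asIdeal → k = l := by
    intro p y k l hk hl
    by_contra hne
    apply p.2.ne_top
    have h := p.asIdeal.sub_mem hl hk
    rw [sub_sub_sub_cancel_left, ← map_sub] at h
    exact Ideal.eq_top_of_isUnit_mem _ h ((IsUnit.mk0 _ (sub_ne_zero.2 hne)).map (algebraMap K A))
  have ex : ∀ (y : A) (p : PrimeSpectrum A), ∃ k : K, y - algebraMap K A k ∈ p.asIdeal := by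
    intro y p
    obtain ⟨U, _, hp, k, hk⟩ := key y p
    exact ⟨k, hk p hp⟩
  choose v hv using ex
  have hvu : ∀ y p k, y - algebraMap K A k ∈ p.asIdeal → v y p = k :=
    fun y p k h => uniq p y _ _ (hv y p) h
  have hlc : ∀ y, IsLocallyConstant (v y) := by
    intro y
    rw [IsLocallyConstant.iff_exists_open]
    intro p
    obtain ⟨U, hU, hp, k, hk⟩ := key y p
    exact ⟨U, hU, hp, fun q hq => by rw [hvu y q k (hk q hq), hvu y p k (hk p hp)]⟩
  have halg : ∀ k p, v (algebraMap K A k) p = k := fun k p => hvu _ _ _ (by simp)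
  have hadd : ∀ x y p, v (x + y) p = v x p + v y p := by
    intro x y p
    apply hvu
    have := p.asIdeal.add_mem (hv x p) (hv y p)
    rw [map_add]
    convert this using 1
    ring
  have hmul : ∀ x y p, v (x * y) p = v x p * v y p := by
    intro x y p
    apply hvu
    have := p.asIdeal.add_mem (p.asIdeal.mul_mem_left y (hv x p))
      (p.asIdeal.mul_mem_left (algebraMap K A (v x p)) (hv y p))
    rw [map_mul]
    convert this using 1
    ring
  let φ : A →ₐ[K] LocallyConstant (PrimeSpectrum A) K :=
    { toFun := fun y => ⟨v y, hlc y⟩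
      map_one' := by ext p; simpa using halg 1 p
      map_zero' := by ext p; simpa using halg 0 p
      map_add' := fun x y => by ext p; exact hadd x y p
      map_mul' := fun x y => by ext p; exact hmul x y p
      commutes' := fun k => by ext p; exact halg k p }
  have hφ : ∀ y p, φ y p = v y p := fun _ _ => rfl
  refine ⟨AlgEquiv.ofBijective φ ⟨?_, ?_⟩⟩
  · rw [injective_iff_map_eq_zero]
    intro y hy
    have hn : IsNilpotent y := by
      rw [← mem_nilradical, nilradical_eq_sInf, Submodule.mem_sInf]
      intro I hI
      have h := hv y ⟨I, hI⟩
      rw [← hφ, hy] at h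
      simpa using h
    obtain ⟨b, hb⟩ := hreg y
    have hpow : ∀ n, y = y ^ (n + 1) * b ^ n := by
      intro n
      induction n with
      | zero => simp
      | succ n ih =>
        calc y = y ^ 2 * b := hb
          _ = y * y * b := by ring
          _ = y * (y ^ (n + 1) * b ^ n) * b := by rw [← ih]
          _ = _ := by ring
    obtain ⟨n, hn⟩ := hn
    rw [hpow n, pow_succ, hn]; simp
  · intro f
    have hcl : ∀ k : K, IsClopen (f ⁻¹' {k}) := fun k => f.isLocallyConstant.isClopen_fiber k
    choose e he hbe using fun k =>
      PrimeSpectrum.exists_idempotent_basicOpen_eq_of_isClopen (hcl k)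
    have hve : ∀ k p, v (e k) p = if f p = k then 1 else 0 := by
      intro k p
      have hmem : f p = k ↔ e k ∉ p.asIdeal := by
        change p ∈ f ⁻¹' {k} ↔ _
        rw [hbe k]; rfl
      apply hvu
      split_ifs with h
      · have h1 : e k * (e k - 1) ∈ p.asIdeal := by
          rw [mul_sub, (he k).eq, mul_one, sub_self]; exact zero_mem _
        simpa using (p.2.mem_or_mem h1).resolve_left (hmem.1 h)
      · simpa using not_not.1 (mt hmem.2 h)
    refine ⟨∑ k ∈ f.range_finite.toFinset, k • e k, ?_⟩
    ext p
    have hs : ∀ s : Finset K, φ (∑ k ∈ s, k • e k) p = ∑ k ∈ s, k * (if f p = k then 1 else 0) := by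
      intro s
      induction s using Finset.induction_on with
      | empty => simp
      | insert a s ha ih =>
        rw [Finset.sum_insert ha, Finset.sum_insert ha, map_add, map_smul,
          LocallyConstant.add_apply, ih, LocallyConstant.smul_apply, hφ, hve, smul_eq_mul]
    rw [hs]
    simp
end

section
/- Let A be a CFG-ring and let f : A → A be a polynomial map, i.e., there is a polynomial F ∈ A[X] with f(x) = F(x) for all x ∈ A. Then the set of iterated maps {f^k : k ∈ ℕ} is finite. -/
theorem stmt_5 (A : Type*) [CommRing A] [IsReduced A]
    (n : ℕ) (x : Fin n → A) (hCFG : ∀ y : A, ∏ i, (y - x i) = 0)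
    (f : A → A) (F : Polynomial A) (hf : ∀ y : A, f y = F.eval y) :
    (Set.range fun k : ℕ => f^[k]).Finite := by
  have key : f^[n.factorial + n] = f^[n] := by
    funext y
    rw [← sub_eq_zero]
    have hmem : f^[n.factorial + n] y - f^[n] y ∈ nilradical A := by
      rw [nilradical_eq_sInf, Ideal.mem_sInf]
      intro P hP
      have hP : P.IsPrime := hP
      let q := Ideal.Quotient.mk P
      let g : A ⧸ P → A ⧸ P := fun z => (F.map q).eval z
      have hs : Function.Semiconj q f g := by
        intro z
        simp only [g, hf, Polynomial.eval_map, Polynomial.eval₂_at_apply]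
      have hex : ∀ k : Fin (n + 1), ∃ i, f^[k] y - x i ∈ P := by
        intro k
        have h : ∏ i, (f^[k] y - x i) ∈ P := by rw [hCFG]; exact P.zero_mem
        obtain ⟨i, -, hi⟩ := hP.prod_mem_iff.1 h
        exact ⟨i, hi⟩
      choose c hc using hex
      obtain ⟨a, b, hab, hcab⟩ := Fintype.exists_ne_map_eq_of_card_lt c (by simp)
      have hq : ∀ a b : Fin (n + 1), c a = c b → g^[a] (q y) = g^[b] (q y) := by
        intro a b h
        rw [← (hs.iterate_right a) y, ← (hs.iterate_right b) y]
        rw [Ideal.Quotient.eq.2 (hc a), Ideal.Quotient.eq.2 (hc b), h]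
      have main : ∀ a b : Fin (n + 1), a < b → c a = c b →
          f^[n.factorial + n] y - f^[n] y ∈ P := by
        intro a b hlt h
        have hlt' : (a : ℕ) < b := hlt
        have hper : Function.IsPeriodicPt g (b - a : ℕ) (g^[a] (q y)) := by
          unfold Function.IsPeriodicPt Function.IsFixedPt
          rw [← Function.iterate_add_apply, Nat.sub_add_cancel hlt'.le]
          exact (hq a b h).symm
        have hper2 : Function.IsPeriodicPt g n.factorial (g^[a] (q y)) :=
          hper.trans_dvd (Nat.dvd_factorial (by omega) (by omega))
        have hper3 := hper2.apply_iterate (n - a : ℕ)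
        rw [← Function.iterate_add_apply, Nat.sub_add_cancel (by omega)] at hper3
        unfold Function.IsPeriodicPt Function.IsFixedPt at hper3
        rw [← Function.iterate_add_apply] at hper3
        rw [← (hs.iterate_right _) y, ← (hs.iterate_right _) y] at hper3
        exact Ideal.Quotient.eq.1 hper3
      rcases lt_or_gt_of_ne hab with h | h
      · exact main a b h hcab
      · exact main b a h hcab.symm
    rwa [nilradical_eq_zero] at hmem
  have hpos := n.factorial_pos
  refine ((Set.finite_Iio (n.factorial + n)).image fun k : ℕ => f^[k]).subset ?_
  rintro _ ⟨k, rfl⟩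
  induction k using Nat.strong_induction_on with
  | _ k ih =>
    by_cases hk : k < n.factorial + n
    · exact ⟨k, hk, rfl⟩
    · have h := ih (k - n.factorial) (by omega)
      have e : f^[k] = f^[k - n.factorial] := by
        have h1 : k = (k - (n.factorial + n)) + (n.factorial + n) := by omega
        have h2 : k - n.factorial = (k - (n.factorial + n)) + n := by omega
        rw [h2]
        conv_lhs => rw [h1]
        rw [Function.iterate_add, key, ← Function.iterate_add]
      simpa only [e] using h
end

section
/- Let K be a field, B a Boolean ring, and let p be a prime ideal of A = K^[B]. Then the composite K → A → A/p of the inclusion of constants with the quotient projection is a ring isomorphism; in particular A/p is isomorphic to K. -/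
theorem stmt_7 (K : Type*) [Field K] (B : Type*) [BooleanRing B]
    (p : Ideal (LocallyConstant (PrimeSpectrum B) K)) (hp : p.IsPrime) :
    Function.Bijective
      ((Ideal.Quotient.mk p).comp
        (algebraMap K (LocallyConstant (PrimeSpectrum B) K))) := by
  haveI := hp
  refine ⟨RingHom.injective _, fun q => ?_⟩
  obtain ⟨f, rfl⟩ := Ideal.Quotient.mk_surjective q
  have key : ∏ c ∈ f.range_finite.toFinset,
      (f - algebraMap K (LocallyConstant (PrimeSpectrum B) K) c) = 0 := by
    ext x
    have h := map_prod (LocallyConstant.evalRingHom (Y := K) x)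
      (fun c => f - algebraMap K (LocallyConstant (PrimeSpectrum B) K) c)
      f.range_finite.toFinset
    refine Eq.trans h (Finset.prod_eq_zero (i := f x) (by simp) ?_)
    change f x - f x = 0
    exact sub_self _
  have hmem := p.zero_mem
  rw [← key] at hmem
  obtain ⟨c, -, hc⟩ := hp.prod_mem_iff.1 hmem
  exact ⟨c, (Ideal.Quotient.eq.2 hc).symm⟩
end

section
/- Let A be a CFG-ring. Then there exist n ∈ ℕ, nontrivial Boolean rings B₁,…,Bₙ, and pairwise non-isomorphic finite fields K₁,…,Kₙ such that A is isomorphic as a ring to the product K₁^[B₁] × ⋯ × Kₙ^[Bₙ]. -/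
/-- A "piece" of the decomposition of a CFG-ring: a finite field `K`
together with a nontrivial Boolean ring `B`. -/
structure CFGPiece : Type 1 where
  K : Type
  fieldK : Field K
  finiteK : Finite K
  B : Type
  boolB : BooleanRing B
  ntB : Nontrivial B

attribute [instance] CFGPiece.fieldK CFGPiece.finiteK CFGPiece.boolB CFGPiece.ntB

open Topology in
/-- Stone-type lemma. -/
theorem stone_aux (Y : Type) [TopologicalSpace Y] [CompactSpace Y]
    (hsep : ∀ y z : Y, y ≠ z → ∃ U : Set Y, IsClopen U ∧ y ∈ U ∧ z ∉ U)
    (K : Type) [CommRing K] [Nonempty Y] :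
    ∃ (B : Type) (_ : BooleanRing B) (_ : Nontrivial B),
      Nonempty (LocallyConstant (PrimeSpectrum B) K ≃+* LocallyConstant Y K) := by
  let B := LocallyConstant Y (ZMod 2)
  have hz2 : ∀ z : ZMod 2, z * z = z := by decide
  have hz3 : ∀ z : ZMod 2, z = 0 ∨ z = 1 := by decide
  have hz4 : ∀ z w : ZMod 2, z + w + z * w = 0 → z = 0 ∧ w = 0 := by decide
  let iB : BooleanRing B :=
    { (inferInstance : CommRing B) with
      isIdempotentElem := fun a => LocallyConstant.ext fun y => hz2 (a y) }
  have nB : Nontrivial B := ⟨0, 1, fun h => by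
    have := congrArg (fun f : B => f (Classical.arbitrary Y)) h
    exact zero_ne_one (α := ZMod 2) this⟩
  refine ⟨B, iB, nB, ?_⟩
  let ev : Y → (B →+* ZMod 2) := fun y => LocallyConstant.evalRingHom y
  have hev : ∀ y (f : B), ev y f = f y := fun _ _ => rfl
  let M : Y → PrimeSpectrum B := fun y => ⟨RingHom.ker (ev y), RingHom.ker_isPrime _⟩
  have hM : ∀ y (f : B), f ∈ (M y).asIdeal ↔ f y = 0 := fun y f => RingHom.mem_ker
  have hcont : Continuous M := by
    refine PrimeSpectrum.isTopologicalBasis_basic_opens.continuous_iff.2 ?_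
    rintro _ ⟨f, rfl⟩
    have : M ⁻¹' (PrimeSpectrum.basicOpen f : Set (PrimeSpectrum B)) = (f : Y → ZMod 2) ⁻¹' {0}ᶜ := by
      ext y
      simp [PrimeSpectrum.mem_basicOpen, hM]
    rw [this]
    exact f.isLocallyConstant _
  have hsurj : Function.Surjective M := by
    intro P
    have : (⋂ f : P.asIdeal, {y : Y | f.1 y = 0}).Nonempty := by
      refine IsCompact.nonempty_iInter_of_directed_nonempty_isCompact_isClosed _ ?_ ?_ ?_ ?_
      · rintro ⟨f, hf⟩ ⟨g, hg⟩
        refine ⟨⟨f + g + f * g, P.asIdeal.add_mem (P.asIdeal.add_mem hf hg)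
          (P.asIdeal.mul_mem_right _ hf)⟩, ?_, ?_⟩
        · intro y hy; exact (hz4 _ _ hy).1
        · intro y hy; exact (hz4 _ _ hy).2
      · rintro ⟨f, hf⟩
        by_contra hne
        rw [Set.not_nonempty_iff_eq_empty] at hne
        apply P.isPrime.ne_top
        rw [Ideal.eq_top_iff_one]
        have : f = 1 := LocallyConstant.ext fun y => by
          rcases hz3 (f y) with h | h
          · have : y ∈ (∅ : Set Y) := hne ▸ h
            exact this.elim
          · exact h
        exact this ▸ hf
      · intro f
        exact (f.1.isLocallyConstant.isClosed_fiber 0).isCompact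
      · intro f
        exact f.1.isLocallyConstant.isClosed_fiber 0
    obtain ⟨y, hy⟩ := this
    simp only [Set.mem_iInter, Set.mem_ofPred_eq, Subtype.forall] at hy
    refine ⟨y, PrimeSpectrum.ext (le_antisymm ?_ ?_)⟩
    · intro f hf
      rw [hM] at hf
      have h0 : f * (1 - f) = 0 := LocallyConstant.ext fun z => by
        change f z * (1 - f z) = 0
        rcases hz3 (f z) with h | h <;> simp [h]
      rcases P.isPrime.mem_or_mem (h0 ▸ P.asIdeal.zero_mem : f * (1 - f) ∈ P.asIdeal) with h | h
      · exact h
      · have := hy _ h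
        change 1 - f y = 0 at this
        simp [hf] at this
    · intro f hf
      exact (hM _ _).2 (hy f hf)
  have hinj : Function.Injective M := by
    intro y z h
    by_contra hne
    obtain ⟨U, hU, hy, hz⟩ := hsep y z hne
    have h1 : LocallyConstant.charFn (ZMod 2) hU ∈ (M z).asIdeal :=
      (hM _ _).2 ((LocallyConstant.charFn_eq_zero _ _ hU).2 hz)
    rw [← h, hM] at h1
    exact (LocallyConstant.charFn_eq_zero _ _ hU).1 h1 hy
  let C : C(Y, PrimeSpectrum B) := ⟨M, hcont⟩
  refine ⟨RingEquiv.ofBijective (LocallyConstant.comapRingHom C) ⟨?_, ?_⟩⟩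
  · exact LocallyConstant.comap_injective C hsurj
  · intro f
    let e := Equiv.ofBijective M ⟨hinj, hsurj⟩
    have hMe : ∀ y, e.symm (M y) = y := fun y => e.symm_apply_apply y
    refine ⟨⟨f ∘ e.symm, ?_⟩, ?_⟩
    · rw [IsLocallyConstant.iff_isOpen_fiber]
      intro k
      have hU := f.isLocallyConstant.isClopen_fiber k
      convert (PrimeSpectrum.basicOpen (LocallyConstant.charFn (ZMod 2) hU : B)).isOpen
      ext P
      obtain ⟨y, rfl⟩ := hsurj P
      simp only [Set.mem_preimage, Function.comp, hMe, SetLike.mem_coe,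
        PrimeSpectrum.mem_basicOpen, hM, Set.mem_singleton_iff]
      exact (not_iff_comm.1 (LocallyConstant.charFn_eq_zero (ZMod 2) y hU).symm).symm
    · exact LocallyConstant.ext fun y => congrArg f (hMe y)

open Topology in
theorem core_aux (A : Type) [CommRing A] [IsReduced A] (ι : Type) [Finite ι] (s : ι → A)
    (Q : Type) (K : Q → Type) [∀ q, CommRing (K q)]
    (π : PrimeSpectrum A → Q) (hπ : IsLocallyConstant π)
    (F : ∀ q p, π p = q → (A →+* K q))
    (hker : ∀ q p h a, F q p h a = 0 ↔ a ∈ p.asIdeal)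
    (hloc : ∀ q p h a, ∀ᶠ p' in 𝓝 p, ∀ h', F q p' h' a = F q p h a)
    (hsur : ∀ q p h k, ∃ i, F q p h (s i) = k) :
    Nonempty (A ≃+* ∀ q, LocallyConstant {p // π p = q} (K q)) := by
  classical
  have hlc : ∀ q a, IsLocallyConstant (fun p : {p // π p = q} => F q p.1 p.2 a) := by
    intro q a
    rw [IsLocallyConstant.iff_eventually_eq]
    intro p
    have := (continuous_subtype_val (p := fun p => π p = q)).continuousAt (x := p)
      |>.eventually (hloc q p.1 p.2 a)
    filter_upwards [this] with p' hp'
    exact hp' _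
  let Φ : A →+* ∀ q, LocallyConstant {p // π p = q} (K q) := 
    { toFun := fun a q => ⟨fun p => F q p.1 p.2 a, hlc q a⟩
      map_one' := by ext q p; exact map_one (F q p.1 p.2)
      map_zero' := by ext q p; exact map_zero (F q p.1 p.2)
      map_mul' := fun a b => by ext q p; exact map_mul (F q p.1 p.2) a b
      map_add' := fun a b => by ext q p; exact map_add (F q p.1 p.2) a b }
  have hΦ : ∀ a q p, Φ a q p = F q p.1 p.2 a := fun _ _ _ => rfl
  refine ⟨RingEquiv.ofBijective Φ ⟨?_, ?_⟩⟩
  · rw [injective_iff_map_eq_zero]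
    intro a ha
    have : a ∈ nilradical A := by
      rw [nilradical_eq_sInf, Ideal.mem_sInf]
      intro I hI
      let p : PrimeSpectrum A := ⟨I, hI⟩
      apply (hker (π p) p rfl a).1
      have := hΦ a (π p) ⟨p, rfl⟩
      rw [ha] at this
      exact this.symm
    exact (mem_nilradical.1 this).eq_zero
  · intro f
    let W : PrimeSpectrum A → Set ι := fun p => {i | F (π p) p rfl (s i) = f (π p) ⟨p, rfl⟩}
    have hW : IsLocallyConstant W := by
      rw [IsLocallyConstant.iff_eventually_eq]
      intro p
      have h1 : ∀ᶠ p' in 𝓝 p, π p' = π p := (IsLocallyConstant.iff_eventually_eq _).1 hπ p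
      have h2 : ∀ᶠ p' in 𝓝 p, ∀ i, ∀ h', F (π p) p' h' (s i) = F (π p) p rfl (s i) :=
        Filter.eventually_all.2 fun i => hloc _ p rfl (s i)
      have h3 : ∀ᶠ p' in 𝓝 p, ∀ h' : π p' = π p, f (π p) ⟨p', h'⟩ = f (π p) ⟨p, rfl⟩ := by
        have := (IsLocallyConstant.iff_eventually_eq _).1 (f (π p)).isLocallyConstant ⟨p, rfl⟩
        rw [nhds_subtype_eq_comap, Filter.eventually_comap] at this
        filter_upwards [this] with p' hp' h'
        exact hp' ⟨p', h'⟩ rfl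
      filter_upwards [h1, h2, h3] with p' h1 h2 h3
      have key : ∀ q (h : π p' = q), W p' = {i | F q p' h (s i) = f q ⟨p', h⟩} := by
        rintro q rfl; rfl
      rw [key _ h1]
      ext i
      simp only [Set.mem_ofPred_eq, h2, h3, W]
    have hWne : ∀ p, (W p).Nonempty := fun p => hsur _ p rfl _
    rcases isEmpty_or_nonempty ι with hι | hι
    · refine ⟨0, ?_⟩
      ext q p
      obtain ⟨i, -⟩ := hsur q p.1 p.2 0
      exact isEmptyElim i
    let ch : Set ι → ι := fun V => if h : V.Nonempty then h.some else Classical.arbitrary ι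
    have hch : ∀ p, ch (W p) ∈ W p := fun p => by
      simp only [ch, dif_pos (hWne p)]; exact (hWne p).some_mem
    have hg : IsLocallyConstant (ch ∘ W) := hW.comp ch
    have : ∀ i, ∃ e : A, IsIdempotentElem e ∧ {p | (ch ∘ W) p = i} = (PrimeSpectrum.basicOpen e : Set (PrimeSpectrum A)) :=
      fun i => PrimeSpectrum.isClopen_iff.1 (hg.isClopen_fiber i)
    choose e he1 he2 using this
    have := Fintype.ofFinite ι
    refine ⟨∑ i, e i * s i, ?_⟩
    ext q ⟨p, hp⟩
    subst hp
    rw [hΦ]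
    simp only [map_sum, map_mul]
    have hone : F (π p) p rfl (e (ch (W p))) = 1 := by
      have h1 : p ∈ {p' | (ch ∘ W) p' = ch (W p)} := rfl
      rw [he2] at h1
      have h2 : e (ch (W p)) ∉ p.asIdeal := h1
      have h3 : (1 - e (ch (W p))) ∈ p.asIdeal := by
        refine (p.isPrime.mem_or_mem (x := e (ch (W p))) ?_).resolve_left h2
        rw [mul_sub, mul_one, he1, sub_self]; exact zero_mem _
      rw [← hker (π p) p rfl, map_sub, map_one, sub_eq_zero] at h3
      exact h3.symm
    rw [Finset.sum_eq_single (ch (W p)), hone, one_mul]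
    · exact hch p
    · intro i _ hi
      have h1 : p ∉ {p' | (ch ∘ W) p' = i} := fun h => hi h.symm
      rw [he2] at h1
      have h2 : e i ∈ p.asIdeal := by_contra fun h => h1 h
      rw [(hker (π p) p rfl _).2 h2, zero_mul]
    · simp

theorem isOpen_mem_aux (A : Type) [CommRing A] (m : ℕ)
    (hm0 : 0 < m) (hm : ∀ a : A, a ^ (m + 1) = a) (a : A) :
    IsClopen {p : PrimeSpectrum A | a ∈ p.asIdeal} := by
  constructor
  · convert PrimeSpectrum.isClosed_zeroLocus {a}
    ext p; simp
  · convert (PrimeSpectrum.basicOpen (1 - a ^ m)).isOpen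
    ext p
    simp only [Set.mem_ofPred_eq, SetLike.mem_coe, PrimeSpectrum.mem_basicOpen]
    constructor
    · intro h h'
      apply p.isPrime.ne_top
      rw [Ideal.eq_top_iff_one]
      have := p.asIdeal.add_mem h' (p.asIdeal.pow_mem_of_mem h m hm0)
      simpa using this
    · intro h
      refine (p.isPrime.mem_or_mem (y := 1 - a ^ m) ?_).resolve_right h
      rw [mul_sub, mul_one, ← pow_succ', hm, sub_self]; exact zero_mem _

open Topology in
theorem main_aux (A : Type) [CommRing A] [IsReduced A] (S : Subring A) [Finite S]
    (hS : ∀ (p : PrimeSpectrum A) (a : A), ∃ s : S, a - s ∈ p.asIdeal) (m : ℕ)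
    (hm0 : 0 < m) (hm : ∀ a : A, a ^ (m + 1) = a) :
    ∃ (n : ℕ) (P : Fin n → CFGPiece),
      (∀ i j, i ≠ j → IsEmpty ((P i).K ≃+* (P j).K)) ∧
      Nonempty (A ≃+* ∀ i, LocallyConstant (PrimeSpectrum (P i).B) (P i).K) := by
  classical
  let X := PrimeSpectrum A
  let c : X → PrimeSpectrum S := PrimeSpectrum.comap S.subtype
  have hc : IsLocallyConstant c := by
    rw [IsLocallyConstant.iff_continuous]
    exact PrimeSpectrum.continuous_comap _
  have : Finite (PrimeSpectrum S) := inferInstance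
  let R := Set.range c
  let st : Setoid R :=
    { r := fun t u => Nonempty (S ⧸ t.1.asIdeal ≃+* S ⧸ u.1.asIdeal)
      iseqv := ⟨fun _ => ⟨RingEquiv.refl _⟩, fun ⟨e⟩ => ⟨e.symm⟩, fun ⟨e⟩ ⟨f⟩ => ⟨e.trans f⟩⟩ }
  obtain ⟨n, ⟨eq⟩⟩ := Finite.exists_equiv_fin (Quotient st)
  let cls : R → Fin n := fun t => eq (Quotient.mk st t)
  let rep : Fin n → R := fun i => (eq.symm i).out
  have hrep : ∀ i, cls (rep i) = i := fun i => by simp [cls, rep]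
  have hcls : ∀ t u, cls t = cls u → Nonempty (S ⧸ t.1.asIdeal ≃+* S ⧸ u.1.asIdeal) := by
    intro t u h
    exact Quotient.exact (eq.injective h)
  have hcls' : ∀ t u : R, Nonempty (S ⧸ t.1.asIdeal ≃+* S ⧸ u.1.asIdeal) → cls t = cls u := by
    intro t u h
    exact congrArg eq (Quotient.sound h)
  let π : X → Fin n := fun p => cls ⟨c p, p, rfl⟩
  have hcR : IsLocallyConstant (fun p => (⟨c p, p, rfl⟩ : R)) :=
    hc.desc _ Subtype.val Subtype.val_injective
  have hπ : IsLocallyConstant π := hcR.comp cls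
  have hfinq : ∀ I : Ideal S, Finite (S ⧸ I) := fun I =>
    Finite.of_surjective _ (Ideal.Quotient.mk_surjective (I := I))
  have hmax : ∀ t : PrimeSpectrum S, t.asIdeal.IsMaximal := fun t =>
    Ideal.Quotient.maximal_of_isField _ (Finite.isField_of_domain _)
  let K : Fin n → Type := fun i => S ⧸ (rep i).1.asIdeal
  let fK : ∀ i, Field (K i) := fun i =>
    have := hmax (rep i).1
    Ideal.Quotient.field _
  have hα : ∀ i (t : R), cls t = i → Nonempty (S ⧸ t.1.asIdeal ≃+* K i) := by
    intro i t h
    exact hcls _ _ (h.trans (hrep i).symm)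
  choose α' hα' using fun i t h => Classical.exists_true_of_nonempty (hα i t h)
  have hψ : ∀ p : X, ∃ ψ : A →+* S ⧸ (c p).asIdeal, (∀ a, ψ a = 0 ↔ a ∈ p.asIdeal) ∧
      ∀ s : S, ψ s = Ideal.Quotient.mk _ s := by
    intro p
    let θ : S ⧸ (c p).asIdeal →+* A ⧸ p.asIdeal := Ideal.quotientMap p.asIdeal S.subtype le_rfl
    have hθ : Function.Bijective θ := by
      refine ⟨Ideal.quotientMap_injective, ?_⟩
      intro b
      obtain ⟨a, rfl⟩ := Ideal.Quotient.mk_surjective b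
      obtain ⟨s, hs⟩ := hS p a
      refine ⟨Ideal.Quotient.mk _ s, ?_⟩
      exact (Ideal.Quotient.eq.2 hs).symm
    let E := RingEquiv.ofBijective θ hθ
    refine ⟨E.symm.toRingHom.comp (Ideal.Quotient.mk _), ?_, ?_⟩
    · intro a
      simp [Ideal.Quotient.eq_zero_iff_mem]
    · intro s
      change E.symm _ = _
      rw [RingEquiv.symm_apply_eq]
      rfl
  choose ψ hψ1 hψ2 using hψ
  let F : ∀ i p, π p = i → (A →+* K i) := fun i p h =>
    (α' i ⟨c p, p, rfl⟩ h).toRingHom.comp (ψ p)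
  have hF : ∀ i p h a, F i p h a = α' i ⟨c p, p, rfl⟩ h (ψ p a) := fun _ _ _ _ => rfl
  have hker : ∀ i p h a, F i p h a = 0 ↔ a ∈ p.asIdeal := by
    intro i p h a
    rw [hF, ← hψ1 p a]
    exact (α' i ⟨c p, p, rfl⟩ h).map_eq_zero_iff
  have hFS : ∀ i p h p' h' (s : S), c p = c p' → F i p h s = F i p' h' s := by
    intro i p h p' h' s hcc
    rw [hF, hF, hψ2, hψ2]
    have : ∀ (t u : R) (h : cls t = i) (h' : cls u = i), t = u →
      α' i t h (Ideal.Quotient.mk _ s) = α' i u h' (Ideal.Quotient.mk _ s) := by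
      rintro t u h h' rfl; rfl
    exact this _ _ _ _ (Subtype.ext hcc)
  have hFapp : ∀ i p h (a : A) (s : S), a - s ∈ p.asIdeal → F i p h a = F i p h s := by
    intro i p h a s has
    rw [← hker i p h, map_sub, sub_eq_zero] at has
    exact has
  have hmain := core_aux A S (fun s => s) (Fin n) K π hπ F hker ?_ ?_
  · have hYne : ∀ i, Nonempty {p // π p = i} := by
      intro i
      obtain ⟨p, hp⟩ := (rep i).2
      refine ⟨p, ?_⟩
      rw [← hrep i]
      exact congrArg cls (Subtype.ext hp)
    have hYc : ∀ i, CompactSpace {p // π p = i} := fun i =>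
      isCompact_iff_compactSpace.1 (hπ.isClosed_fiber i).isCompact
    have hsep : ∀ i, ∀ y z : {p // π p = i}, y ≠ z → ∃ U, IsClopen U ∧ y ∈ U ∧ z ∉ U := by
      intro i y z hyz
      have hlt : ∃ a, a ∈ y.1.asIdeal ↔ a ∉ z.1.asIdeal := by
        by_contra hcon
        push Not at hcon
        apply hyz
        apply Subtype.ext
        apply PrimeSpectrum.ext
        ext a
        have := hcon a
        tauto
      obtain ⟨a, ha⟩ := hlt
      have hcl := (isOpen_mem_aux A m hm0 hm a).preimage
        (continuous_subtype_val (p := fun p => π p = i))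
      by_cases hy : a ∈ y.1.asIdeal
      · exact ⟨_, hcl, hy, ha.1 hy⟩
      · exact ⟨_, hcl.compl, hy, fun h => h (by_contra fun h' => hy (ha.2 h'))⟩
    choose B iB nB hB using fun i => stone_aux {p // π p = i} (hsep i) (K i)
    let P : Fin n → CFGPiece := fun i => 
      { K := K i, fieldK := fK i, finiteK := hfinq _,
        B := B i, boolB := iB i, ntB := nB i }
    refine ⟨n, P, ?_, ?_⟩
    · intro i j hij
      refine ⟨fun e => hij ?_⟩
      rw [← hrep i, ← hrep j]
      exact hcls' _ _ ⟨e⟩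
    · obtain ⟨E⟩ := hmain
      exact ⟨E.trans (RingEquiv.piCongrRight fun i => (hB i).some.symm)⟩
  · intro i p h a
    obtain ⟨s, hs⟩ := hS p a
    have h1 : ∀ᶠ p' in 𝓝 p, a - s ∈ p'.asIdeal :=
      (isOpen_mem_aux A m hm0 hm (a - s)).isOpen.mem_nhds hs
    have h2 := (IsLocallyConstant.iff_eventually_eq _).1 hc p
    filter_upwards [h1, h2] with p' h1 h2 h'
    rw [hFapp i p h a s hs, hFapp i p' h' a s h1]
    exact hFS _ _ _ _ _ _ h2
  · intro i p h k
    obtain ⟨k', rfl⟩ := (α' i ⟨c p, p, rfl⟩ h).surjective k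
    obtain ⟨s, rfl⟩ := Ideal.Quotient.mk_surjective k'
    exact ⟨s, by rw [hF, hψ2]⟩

theorem pow_aux (A : Type) [CommRing A] [IsReduced A]
    (N : ℕ) (x : Fin N → A) (hx : ∀ (p : PrimeSpectrum A) a, ∃ i, a - x i ∈ p.asIdeal) (a : A) :
    a ^ (N.factorial + 1) = a := by
  suffices a ^ (N.factorial + 1) - a ∈ nilradical A from
    sub_eq_zero.1 (mem_nilradical.1 this).eq_zero
  rw [nilradical_eq_sInf, Ideal.mem_sInf]
  intro I hI
  have hI' : I.IsPrime := hI
  have hsur : Function.Surjective (fun i => Ideal.Quotient.mk I (x i)) := by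
    intro b
    obtain ⟨b, rfl⟩ := Ideal.Quotient.mk_surjective b
    obtain ⟨i, hi⟩ := hx ⟨I, hI⟩ b
    exact ⟨i, (Ideal.Quotient.eq.2 hi).symm⟩
  have hfin : Finite (A ⧸ I) := Finite.of_surjective _ hsur
  have hcard : Nat.card (A ⧸ I) ≤ N := by
    simpa using Nat.card_le_card_of_surjective _ hsur
  letI : Field (A ⧸ I) := (Finite.isField_of_domain (A ⧸ I)).toField
  letI := Fintype.ofFinite (A ⧸ I)
  rw [← Ideal.Quotient.eq_zero_iff_mem, map_sub, map_pow, sub_eq_zero]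
  by_cases h0 : Ideal.Quotient.mk I a = 0
  · rw [h0, zero_pow (by omega)]
  · have h1 := FiniteField.pow_card_sub_one_eq_one _ h0
    rw [Nat.card_eq_fintype_card] at hcard
    have hlt := Fintype.one_lt_card (α := A ⧸ I)
    obtain ⟨d, hd⟩ := Nat.dvd_factorial (m := Fintype.card (A ⧸ I) - 1) (n := N)
      (by omega) (by omega)
    rw [pow_succ, hd, pow_mul, h1, one_pow, one_mul]

theorem stmt_8 (A : Type) [CommRing A] [IsReduced A]
    (N : ℕ) (x : Fin N → A) (hCFG : ∀ y : A, ∏ i, (y - x i) = 0) :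
    ∃ (n : ℕ) (P : Fin n → CFGPiece),
      (∀ i j, i ≠ j → IsEmpty ((P i).K ≃+* (P j).K)) ∧
      Nonempty (A ≃+* ∀ i, LocallyConstant (PrimeSpectrum (P i).B) (P i).K) := by
  have hx : ∀ (p : PrimeSpectrum A) a, ∃ i, a - x i ∈ p.asIdeal := by
    intro p a
    have h := hCFG a
    have h' : ∏ i, (a - x i) ∈ p.asIdeal := h ▸ zero_mem _
    obtain ⟨i, -, hi⟩ := (Ideal.IsPrime.prod_mem_iff (p := p.asIdeal)).1 h'
    exact ⟨i, hi⟩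
  have hm := pow_aux A N x hx
  have hm0 := N.factorial_pos
  generalize N.factorial = m at hm hm0
  obtain ⟨k, hk⟩ := CharP.exists A
  have hk0 : k ≠ 0 := by
    rintro rfl
    have h2 := hm 2
    have h3 : ((2 ^ (m + 1) - 2 : ℕ) : A) = 0 := by
      rw [Nat.cast_sub (by rw [pow_succ]; have := Nat.one_le_two_pow (n := m); omega)]
      push_cast
      rw [h2, sub_self]
    rw [CharP.cast_eq_zero_iff A 0, zero_dvd_iff] at h3
    have : 2 ^ 2 ≤ 2 ^ (m + 1) := Nat.pow_le_pow_right (by norm_num) (by omega)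
    omega
  have : NeZero k := ⟨hk0⟩
  letI := ZMod.algebra A k
  let S := Algebra.adjoin (ZMod k) (Set.range x)
  have hfg : S.toSubmodule.FG := by
    refine fg_adjoin_of_finite (Set.finite_range x) ?_
    intro y _
    refine ⟨Polynomial.X ^ (m + 1) - Polynomial.X, ?_, ?_⟩
    · exact Polynomial.monic_X_pow_sub (Polynomial.degree_X_le.trans_lt (by exact_mod_cast Nat.succ_lt_succ hm0))
    · simp [hm]
  have : Module.Finite (ZMod k) S := Module.Finite.of_fg hfg
  have hfin : Finite S := Module.finite_of_finite (ZMod k)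
  have : Finite S.toSubring := hfin
  refine main_aux A S.toSubring ?_ m hm0 hm
  intro p a
  obtain ⟨i, hi⟩ := hx p a
  exact ⟨⟨x i, Algebra.subset_adjoin ⟨i, rfl⟩⟩, hi⟩
end

section
/- The decomposition of a CFG-ring is unique up to isomorphism and order: if K₁,…,Kₙ are pairwise non-isomorphic finite fields, L₁,…,Lₘ are pairwise non-isomorphic finite fields, B₁,…,Bₙ and C₁,…,Cₘ are nontrivial Boolean rings, and the rings K₁^[B₁] × ⋯ × Kₙ^[Bₙ] and L₁^[C₁] × ⋯ × Lₘ^[Cₘ] are isomorphic, then n = m and there is a permutation σ of {1,…,n} such that Kᵢ is isomorphic to L₍σᵢ₎ and Bᵢ is isomorphic to C₍σᵢ₎ as rings, for every i. -/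
open Polynomial in
theorem cfg_field_iso {X K L : Type} [TopologicalSpace X] [Field K] [Finite K] [Field L] [Finite L]
    (g : LocallyConstant X K →+* L) (hg : Function.Surjective g) : Nonempty (K ≃+* L) := by
  classical
  have := Fintype.ofFinite K
  have := Fintype.ofFinite L
  let k : K →+* L := g.comp LocallyConstant.constRingHom
  have hk : Function.Injective k := k.injective
  have hq : 1 < Fintype.card K := Fintype.one_lt_card
  have hroot : ∀ l : L, l ^ Fintype.card K = l := by
    intro l
    obtain ⟨f, rfl⟩ := hg l
    rw [← map_pow]
    have hf : f ^ Fintype.card K = f := by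
      ext x
      exact FiniteField.pow_card (f x)
    rw [hf]
  have hle : Fintype.card L ≤ Fintype.card K := by
    rw [← FiniteField.X_pow_card_sub_X_natDegree_eq L hq]
    apply Polynomial.card_le_degree_of_subset_roots (Z := Finset.univ)
    intro l _
    rw [Polynomial.mem_roots (FiniteField.X_pow_card_sub_X_ne_zero L hq)]
    simp [hroot]
  have hcard : Fintype.card K = Fintype.card L :=
    le_antisymm (Fintype.card_le_of_injective k hk) hle
  exact ⟨RingEquiv.ofBijective k ((Fintype.bijective_iff_injective_and_card k).2 ⟨hk, hcard⟩)⟩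

theorem cfg_boolean_mul {B C : Type} [BooleanRing B] [BooleanRing C] (e : B ≃* C) :
    Nonempty (B ≃+* C) := by
  let o : AsBoolAlg B ≃o AsBoolAlg C :=
    { toEquiv := ofBoolAlg.trans (e.toEquiv.trans toBoolAlg)
      map_rel_iff' := by
        intro a b
        rw [← ofBoolAlg_mul_ofBoolAlg_eq_left_iff, ← ofBoolAlg_mul_ofBoolAlg_eq_left_iff]
        simp [← map_mul] }
  refine ⟨{ e with map_add' := ?_ }⟩
  intro a b
  have h := map_symmDiff' (F := AsBoolAlg B ≃o AsBoolAlg C) o (toBoolAlg a) (toBoolAlg b)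
  rw [← toBoolAlg_add] at h
  have h2 := congrArg ofBoolAlg h
  rw [ofBoolAlg_symmDiff] at h2
  exact h2

theorem cfg_char {B K : Type} [BooleanRing B] [Field K] :
    ∃ E : B → LocallyConstant (PrimeSpectrum B) K, Function.Injective E ∧
      (∀ a b, E (a * b) = E a * E b) ∧ ∀ f, f * f = f ↔ ∃ b, E b = f := by
  classical
  have hid : ∀ b : B, IsIdempotentElem b := fun b => BooleanRing.mul_self b
  have hc : ∀ b : B, IsClopen (PrimeSpectrum.basicOpen b : Set (PrimeSpectrum B)) := fun b =>
    PrimeSpectrum.isClopen_basicOpen_of_mul_add b (1 + b) (BooleanRing.mul_one_add_self b) (by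
      rw [add_left_comm, BooleanRing.add_self, add_zero])
  have hmul : ∀ a b : B, LocallyConstant.charFn K (hc (a * b)) =
      LocallyConstant.charFn K (hc a) * LocallyConstant.charFn K (hc b) := by
    intro a b
    ext x
    simp only [LocallyConstant.coe_mul, Pi.mul_apply, LocallyConstant.coe_charFn, Set.indicator,
      PrimeSpectrum.basicOpen_mul]
    by_cases h1 : x ∈ PrimeSpectrum.basicOpen a <;> by_cases h2 : x ∈ PrimeSpectrum.basicOpen b <;>
      simp_all
  refine ⟨fun b => LocallyConstant.charFn K (hc b), ?_, hmul, ?_⟩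
  · intro a b h
    exact PrimeSpectrum.basicOpen_injOn_isIdempotentElem (hid a) (hid b)
      (SetLike.ext' (LocallyConstant.charFn_inj K _ _ h))
  · intro f
    constructor
    · intro hf
      obtain ⟨b, _, hb⟩ := PrimeSpectrum.exists_idempotent_basicOpen_eq_of_isClopen
        (f.isLocallyConstant.isClopen_fiber 1)
      refine ⟨b, ?_⟩
      ext x
      have hx : f x * f x = f x := by
        conv_rhs => rw [← hf]
        rfl
      have hm : x ∈ (PrimeSpectrum.basicOpen b : Set (PrimeSpectrum B)) ↔ f x = 1 := by
        rw [← hb]; rfl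
      rw [LocallyConstant.coe_charFn]
      rcases (IsIdempotentElem.iff_eq_zero_or_one).1 hx with h0 | h1
      · rw [Set.indicator_of_notMem, h0]
        rw [hm, h0]; simp
      · rw [Set.indicator_of_mem (hm.2 h1), h1]; rfl
    · rintro ⟨b, rfl⟩
      rw [← hmul, BooleanRing.mul_self]

theorem cfg_bool_iso {B C K L : Type} [BooleanRing B] [BooleanRing C] [Field K] [Field L]
    (e : LocallyConstant (PrimeSpectrum B) K ≃* LocallyConstant (PrimeSpectrum C) L) :
    Nonempty (B ≃+* C) := by
  obtain ⟨E, hE, hEm, hEi⟩ := cfg_char (B := B) (K := K)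
  obtain ⟨F, hF, hFm, hFi⟩ := cfg_char (B := C) (K := L)
  have h1 : ∀ b, ∃ c, F c = e (E b) := fun b => (hFi _).1 (by
    rw [← map_mul, (hEi _).2 ⟨b, rfl⟩])
  have h2 : ∀ c, ∃ b, E b = e.symm (F c) := fun c => (hEi _).1 (by
    rw [← map_mul, (hFi _).2 ⟨c, rfl⟩])
  choose u hu using h1
  choose v hv using h2
  exact cfg_boolean_mul
    { toFun := u
      invFun := v
      left_inv := fun b => hE (by rw [hv, hu, e.symm_apply_apply])
      right_inv := fun c => hF (by rw [hu, hv, e.apply_symm_apply])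
      map_mul' := fun a b => hF (by rw [hu, hFm, hu, hu, hEm, map_mul]) }

section
variable {n m : ℕ} {P : Fin n → CFGPiece} {Q : Fin m → CFGPiece}

/-- the ring attached to a family of pieces -/
abbrev CFGProd {n : ℕ} (P : Fin n → CFGPiece) : Type :=
  ∀ i, LocallyConstant (PrimeSpectrum (P i).B) (P i).K

theorem cfg_single_mul (i : Fin n) (r : CFGProd P) :
    r * Pi.single i 1 = Pi.single i (r i) := by
  funext k
  by_cases hk : k = i
  · subst hk; simp
  · simp [hk]

theorem cfg_point (φ : CFGProd P ≃+* CFGProd Q) (i : Fin n) (j : Fin m)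
    (y : PrimeSpectrum (Q j).B) (hy : φ (Pi.single i 1) j y ≠ 0) :
    Nonempty ((P i).K ≃+* (Q j).K) := by
  have h1 : φ (Pi.single i 1) j y = 1 := by
    have h : φ (Pi.single i 1) * φ (Pi.single i 1) = φ (Pi.single i 1) := by
      rw [← map_mul, cfg_single_mul, Pi.single_eq_same]
    have h2 : φ (Pi.single i 1) j y * φ (Pi.single i 1) j y = φ (Pi.single i 1) j y :=
      congrArg (fun r : CFGProd Q => r j y) h
    exact (mul_eq_left₀ hy).1 h2
  let g : LocallyConstant (PrimeSpectrum (P i).B) (P i).K →+* (Q j).K :=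
    { toFun := fun f => φ (Pi.single i f) j y
      map_one' := h1
      map_zero' := by rw [Pi.single_zero, map_zero]; rfl
      map_mul' := fun a b => by rw [Pi.single_mul, map_mul]; rfl
      map_add' := fun a b => by rw [Pi.single_add, map_add]; rfl }
  refine cfg_field_iso g fun l => ?_
  let r : CFGProd P := φ.symm (Pi.single j (LocallyConstant.const _ l))
  refine ⟨r i, ?_⟩
  change φ (Pi.single i (r i)) j y = l
  rw [← cfg_single_mul, map_mul]
  change φ r j y * φ (Pi.single i 1) j y = l
  rw [h1, mul_one]
  simp [r]

theorem cfg_exists (φ : CFGProd P ≃+* CFGProd Q) (j : Fin m) :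
    ∃ i, Nonempty ((P i).K ≃+* (Q j).K) := by
  obtain ⟨y⟩ : Nonempty (PrimeSpectrum (Q j).B) := inferInstance
  by_contra hcon
  have hz : ∀ i, φ (Pi.single i 1) j y = 0 := fun i => by
    by_contra hne
    exact hcon ⟨i, cfg_point φ i j y hne⟩
  have hs : (1 : CFGProd P) = ∑ i, Pi.single i 1 := (Finset.univ_sum_single (1 : CFGProd P)).symm
  let ev : CFGProd Q →+* (Q j).K := (LocallyConstant.evalRingHom y).comp (Pi.evalRingHom _ j)
  have h2 : ev (φ 1) = ∑ i, ev (φ (Pi.single i 1)) := by rw [hs, map_sum, map_sum]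
  rw [map_one, map_one] at h2
  exact one_ne_zero (h2.trans (Finset.sum_eq_zero (fun i _ => hz i)))

theorem cfg_supp (φ : CFGProd P ≃+* CFGProd Q) (i : Fin n) (j : Fin m)
    (hj : ∀ j', Nonempty ((P i).K ≃+* (Q j').K) → j' = j) :
    φ (Pi.single i 1) * Pi.single j 1 = φ (Pi.single i 1) := by
  rw [cfg_single_mul]
  funext j'
  by_cases h : j' = j
  · subst h; simp
  · rw [Pi.single_eq_of_ne h]
    ext y
    by_contra hne
    exact h (hj j' (cfg_point φ i j' y (fun h0 => hne h0.symm)))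

theorem cfg_pieces (φ : CFGProd P ≃+* CFGProd Q) (i : Fin n) (j : Fin m)
    (hj : ∀ j', Nonempty ((P i).K ≃+* (Q j').K) → j' = j)
    (hi : ∀ i', Nonempty ((Q j).K ≃+* (P i').K) → i' = i) :
    Nonempty ((P i).B ≃+* (Q j).B) := by
  have h1 := cfg_supp φ i j hj
  have h2 := cfg_supp φ.symm j i hi
  have h3 : φ (Pi.single i 1) = Pi.single j 1 := by
    have h4 := congrArg φ h2
    rw [map_mul, φ.apply_symm_apply, mul_comm, h1] at h4
    exact h4
  have h3' : φ.symm (Pi.single j 1) = Pi.single i 1 := by rw [← h3, φ.symm_apply_apply]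
  have hl : ∀ f, (Pi.single j (φ (Pi.single i f) j) : CFGProd Q) = φ (Pi.single i f) := by
    intro f
    rw [← cfg_single_mul, ← h3, ← map_mul, cfg_single_mul, Pi.single_eq_same]
  have hr : ∀ f, (Pi.single i (φ.symm (Pi.single j f) i) : CFGProd P)
      = φ.symm (Pi.single j f) := by
    intro f
    rw [← cfg_single_mul, ← h3', ← map_mul, cfg_single_mul, Pi.single_eq_same]
  exact cfg_bool_iso (K := (P i).K) (L := (Q j).K)
    { toFun := fun f => φ (Pi.single i f) j
      invFun := fun f => φ.symm (Pi.single j f) i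
      left_inv := fun f => by
        change φ.symm (Pi.single j (φ (Pi.single i f) j)) i = f
        rw [hl, φ.symm_apply_apply, Pi.single_eq_same]
      right_inv := fun f => by
        change φ (Pi.single i (φ.symm (Pi.single j f) i)) j = f
        rw [hr, φ.apply_symm_apply, Pi.single_eq_same]
      map_mul' := fun a b => by rw [Pi.single_mul, map_mul]; rfl }

end

theorem stmt_9 (n m : ℕ) (P : Fin n → CFGPiece) (Q : Fin m → CFGPiece)
    (hP : ∀ i j, i ≠ j → IsEmpty ((P i).K ≃+* (P j).K))
    (hQ : ∀ i j, i ≠ j → IsEmpty ((Q i).K ≃+* (Q j).K))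
    (h : Nonempty ((∀ i, LocallyConstant (PrimeSpectrum (P i).B) (P i).K) ≃+*
      (∀ j, LocallyConstant (PrimeSpectrum (Q j).B) (Q j).K))) :
    n = m ∧ ∃ σ : Fin n ≃ Fin m,
      ∀ i, Nonempty ((P i).K ≃+* (Q (σ i)).K) ∧ Nonempty ((P i).B ≃+* (Q (σ i)).B) := by
  obtain ⟨φ⟩ := h
  have hPu : ∀ i j, Nonempty ((P i).K ≃+* (P j).K) → i = j := fun i j hn => by
    by_contra hne
    exact not_isEmpty_iff.2 hn (hP i j hne)
  have hQu : ∀ i j, Nonempty ((Q i).K ≃+* (Q j).K) → i = j := fun i j hn => by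
    by_contra hne
    exact not_isEmpty_iff.2 hn (hQ i j hne)
  choose τ hτ using cfg_exists (P := P) (Q := Q) φ
  choose s hs using cfg_exists (P := Q) (Q := P) φ.symm
  let σ : Fin n ≃ Fin m :=
    { toFun := s
      invFun := τ
      left_inv := fun i => hPu _ _ (by
        obtain ⟨a⟩ := hτ (s i)
        obtain ⟨b⟩ := hs i
        exact ⟨a.trans b⟩)
      right_inv := fun j => hQu _ _ (by
        obtain ⟨a⟩ := hτ j
        obtain ⟨b⟩ := hs (τ j)
        exact ⟨b.trans a⟩) }
  refine ⟨by simpa using Fintype.card_congr σ, σ, fun i => ?_⟩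
  obtain ⟨b⟩ := hs i
  refine ⟨⟨b.symm⟩, cfg_pieces φ i (s i) ?_ ?_⟩
  · rintro j' ⟨a⟩
    exact (hQu _ _ ⟨b.trans a⟩).symm
  · rintro i' ⟨a⟩
    exact (hPu _ _ ⟨b.symm.trans a⟩).symm
end

section
/- Let A be a commutative von Neumann regular ring and let f : A → A be a map. The following are equivalent: (1) f commutes with convex combinations, i.e., for any x₁,…,xₙ ∈ A and any complete family of orthogonal idempotents a₁,…,aₙ of A one has f(∑ᵢ aᵢxᵢ) = ∑ᵢ aᵢ f(xᵢ); (2) for all x, y ∈ A, f(x) − f(y) belongs to the principal ideal (x − y)A. -/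
theorem stmt_10 (A : Type*) [CommRing A]
    (hreg : ∀ a : A, ∃ b : A, a = a ^ 2 * b) (f : A → A) :
    (∀ (n : ℕ) (a x : Fin n → A), IsCFOI a →
        f (∑ i, a i * x i) = ∑ i, a i * f (x i)) ↔
      (∀ x y : A, f x - f y ∈ Ideal.span {x - y}) := by
  constructor
  · intro h x y
    obtain ⟨b, hb⟩ := hreg (x - y)
    have he : IsIdempotentElem ((x - y) * b) := by
      unfold IsIdempotentElem
      linear_combination (-b) * hb
    have hc : IsCFOI ![(x - y) * b, 1 - (x - y) * b] := by
      refine ⟨?_, ?_, ?_⟩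
      · intro i
        fin_cases i
        · exact he
        · exact he.one_sub
      · intro i j hij
        unfold IsIdempotentElem at he
        fin_cases i <;> fin_cases j
        · exact absurd rfl hij
        · change (x - y) * b * (1 - (x - y) * b) = 0
          linear_combination -he
        · change (1 - (x - y) * b) * ((x - y) * b) = 0
          linear_combination -he
        · exact absurd rfl hij
      · simp [Fin.sum_univ_two]
    have h2 := h 2 _ ![x, y] hc
    simp only [Fin.sum_univ_two, Matrix.cons_val_zero, Matrix.cons_val_one] at h2
    have hx : (x - y) * b * x + (1 - (x - y) * b) * y = x := by
      linear_combination -hb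
    rw [hx] at h2
    rw [Ideal.mem_span_singleton]
    exact ⟨b * (f x - f y), by linear_combination h2⟩
  · intro h n a x ha
    obtain ⟨hid, horth, hsum⟩ := ha
    have key : ∀ j, a j * f (∑ i, a i * x i) = a j * f (x j) := by
      intro j
      have h1 : a j * ∑ i, a i * x i = a j * x j := by
        rw [Finset.mul_sum, Finset.sum_eq_single j]
        · rw [← mul_assoc, hid j]
        · intro i _ hij
          rw [← mul_assoc, horth j i hij.symm, zero_mul]
        · simp
      obtain ⟨c, hc⟩ := Ideal.mem_span_singleton.1 (h (∑ i, a i * x i) (x j))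
      linear_combination a j * hc + c * h1
    rw [← Finset.sum_congr rfl fun j _ => key j, ← Finset.sum_mul, hsum, one_mul]
end

section
/- Let A be a commutative von Neumann regular ring. The following are equivalent: (i) there exists a polynomial F ∈ A[X] such that for every x ∈ A the element F(x) is idempotent and generates the same principal ideal as x (i.e., F(x)A = xA); (ii) there exists a natural number n such that for every prime ideal p of A the quotient A/p is finite with |A/p| < n. -/
theorem stmt_11 (A : Type*) [CommRing A]
    (hreg : ∀ a : A, ∃ b : A, a = a ^ 2 * b) :
    (∃ F : Polynomial A, ∀ x : A, IsIdempotentElem (F.eval x) ∧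
        Ideal.span {F.eval x} = Ideal.span {x}) ↔
      (∃ n : ℕ, ∀ (p : Ideal A), p.IsPrime →
        Finite (A ⧸ p) ∧ Nat.card (A ⧸ p) < n) := by
  have hpow : ∀ (a : A) (k : ℕ), ∃ c : A, a = a ^ k * c := by
    intro a k
    obtain ⟨b, hb⟩ := hreg a
    have : ∀ k : ℕ, a = a ^ (k + 1) * b ^ k := by
      intro k
      induction k with
      | zero => simp
      | succ k ih =>
        calc a = a ^ (k + 1) * b ^ k := ih
          _ = a ^ k * b ^ k * a := by ring
          _ = a ^ k * b ^ k * (a ^ 2 * b) := by rw [← hb]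
          _ = _ := by ring
    exact ⟨a * b ^ k, by rw [← mul_assoc, ← pow_succ]; exact this k⟩
  constructor
  · rintro ⟨F, hF⟩
    refine ⟨F.natDegree + 2, fun p hp => ?_⟩
    set f := F.map (Ideal.Quotient.mk p) with hf
    have hev : ∀ x : A, f.eval (Ideal.Quotient.mk p x) = Ideal.Quotient.mk p (F.eval x) := by
      intro x; rw [hf, Polynomial.eval_map, Polynomial.eval₂_at_apply]
    have h0 : f.eval 0 = 0 := by
      have h1 := (hF 0).2
      rw [Ideal.span_singleton_eq_bot.mpr rfl, Ideal.span_singleton_eq_bot] at h1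
      have := hev 0
      rwa [h1, map_zero] at this
    have hroot : ∀ y : A ⧸ p, (Polynomial.X * (f - 1)).eval y = 0 := by
      intro y
      obtain ⟨x, rfl⟩ := Ideal.Quotient.mk_surjective y
      have hid : f.eval (Ideal.Quotient.mk p x) * f.eval (Ideal.Quotient.mk p x) =
          f.eval (Ideal.Quotient.mk p x) := by
        rw [hev, ← map_mul, (hF x).1]
      have hx : x ∈ Ideal.span {F.eval x} := by
        rw [(hF x).2]; exact Ideal.mem_span_singleton_self x
      obtain ⟨c, hc⟩ := Ideal.mem_span_singleton'.mp hx
      have hc' : Ideal.Quotient.mk p x = Ideal.Quotient.mk p c * f.eval (Ideal.Quotient.mk p x) := by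
        rw [hev, ← map_mul, hc]
      simp only [Polynomial.eval_mul, Polynomial.eval_X, Polynomial.eval_sub, Polynomial.eval_one]
      generalize f.eval (Ideal.Quotient.mk p x) = u at *
      rw [hc']
      linear_combination (Ideal.Quotient.mk p c) * hid
    have hne : Polynomial.X * (f - 1) ≠ 0 := by
      refine mul_ne_zero Polynomial.X_ne_zero ?_
      intro h
      have := congrArg (Polynomial.eval 0) h
      simp [h0] at this
    have hfin : Finite (A ⧸ p) := by
      by_contra hinf
      rw [not_finite_iff_infinite] at hinf
      exact hne (Polynomial.funext (fun r => by rw [hroot r, Polynomial.eval_zero]))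
    refine ⟨hfin, ?_⟩
    have := Fintype.ofFinite (A ⧸ p)
    by_contra hlt
    apply hne
    refine Polynomial.eq_zero_of_natDegree_lt_card_of_eval_eq_zero _
      (f := (id : A ⧸ p → A ⧸ p)) Function.injective_id (fun i => hroot i) ?_
    rw [Nat.card_eq_fintype_card] at hlt
    have h1 : (f - 1).natDegree ≤ F.natDegree := by
      refine (Polynomial.natDegree_sub_le _ _).trans ?_
      simpa using Polynomial.natDegree_map_le
    have h2 := Polynomial.natDegree_mul_le (p := (Polynomial.X : Polynomial (A ⧸ p))) (q := f - 1)
    rw [Polynomial.natDegree_X] at h2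
    omega
  · rintro ⟨n, hn⟩
    refine ⟨Polynomial.X ^ n.factorial, fun x => ?_⟩
    rw [Polynomial.eval_pow, Polynomial.eval_X]
    constructor
    · have hnil : IsNilpotent (x ^ n.factorial * x ^ n.factorial - x ^ n.factorial) := by
        rw [nilpotent_iff_mem_prime]
        intro p hp
        obtain ⟨hfin, hcard⟩ := hn p hp
        rw [← Ideal.Quotient.eq_zero_iff_mem]
        simp only [map_sub, map_mul, map_pow]
        generalize Ideal.Quotient.mk p x = y
        by_cases hy : y = 0
        · simp [hy, Nat.factorial_ne_zero]
        · have := Fintype.ofFinite (A ⧸ p)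
          classical
          letI := Fintype.fieldOfDomain (A ⧸ p)
          have h1 : y ^ (Fintype.card (A ⧸ p) - 1) = 1 :=
            FiniteField.pow_card_sub_one_eq_one y hy
          have h2 : 1 < Fintype.card (A ⧸ p) := Fintype.one_lt_card
          rw [Nat.card_eq_fintype_card] at hcard
          obtain ⟨k, hk⟩ := Nat.dvd_factorial (m := Fintype.card (A ⧸ p) - 1) (n := n)
            (by omega) (by omega)
          have h3 : y ^ n.factorial = 1 := by
            rw [hk, pow_mul]
            exact (congrArg (· ^ k) h1).trans (one_pow k)
          rw [h3]; simp
      obtain ⟨k, hk⟩ := hnil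
      obtain ⟨c, hc⟩ := hpow (x ^ n.factorial * x ^ n.factorial - x ^ n.factorial) k
      rw [hk, zero_mul] at hc
      exact sub_eq_zero.mp hc
    · apply le_antisymm
      · rw [Ideal.span_singleton_le_span_singleton]
        exact dvd_pow_self x (Nat.factorial_ne_zero n)
      · rw [Ideal.span_singleton_le_span_singleton]
        obtain ⟨c, hc⟩ := hpow x n.factorial
        exact ⟨c, hc⟩
end

section
/- Let A be a commutative von Neumann regular ring such that there is a natural number n with |A/p| ≤ n for every prime ideal p of A (all such quotients being finite). Then there exists an integer m ≥ 1 such that for every x ∈ A the element x^m is idempotent and generates the same principal ideal as x, i.e., x^m A = xA. -/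
theorem stmt_12 (A : Type*) [CommRing A]
    (hreg : ∀ a : A, ∃ b : A, a = a ^ 2 * b)
    (n : ℕ) (hfin : ∀ (p : Ideal A), p.IsPrime →
      Finite (A ⧸ p) ∧ Nat.card (A ⧸ p) ≤ n) :
    ∃ m : ℕ, 1 ≤ m ∧ ∀ x : A, IsIdempotentElem (x ^ m) ∧
      Ideal.span {x ^ m} = Ideal.span {x} := by
  have hred : IsReduced A := by
    rw [isReduced_iff_pow_one_lt 2 (by norm_num)]
    intro a ha
    obtain ⟨b, hb⟩ := hreg a
    rw [hb, ha, zero_mul]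
  have key : ∀ x : A, x * x ^ n.factorial = x := by
    intro x
    rw [← sub_eq_zero]
    apply IsNilpotent.eq_zero
    rw [← mem_nilradical, nilradical_eq_sInf, Ideal.mem_sInf]
    intro p hp
    have hp' : p.IsPrime := hp
    obtain ⟨hf, hc⟩ := hfin p hp'
    rw [← Ideal.Quotient.eq_zero_iff_mem, map_sub, map_mul, map_pow]
    generalize (Ideal.Quotient.mk p) x = y
    by_cases hy : y = 0
    · simp [hy]
    letI := Fintype.ofFinite (A ⧸ p)
    letI : Field (A ⧸ p) := (Finite.isField_of_domain (A ⧸ p)).toField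
    have h1 : y ^ (Fintype.card (A ⧸ p) - 1) = 1 := FiniteField.pow_card_sub_one_eq_one y hy
    rw [Nat.card_eq_fintype_card] at hc
    have h2 : 1 < Fintype.card (A ⧸ p) := Fintype.one_lt_card
    obtain ⟨k, hk⟩ := Nat.dvd_factorial (m := Fintype.card (A ⧸ p) - 1) (n := n)
      (by omega) (by omega)
    rw [hk, pow_mul, h1, one_pow, mul_one, sub_self]
  have hm : 1 ≤ n.factorial := Nat.factorial_pos n
  refine ⟨n.factorial, hm, fun x => ?_⟩
  have hx := key x
  obtain ⟨k, hk⟩ := Nat.exists_eq_add_of_le' hm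
  rw [hk] at hx ⊢
  constructor
  · unfold IsIdempotentElem
    calc x ^ (k + 1) * x ^ (k + 1) = x ^ k * (x * x ^ (k + 1)) := by ring
      _ = x ^ (k + 1) := by rw [hx]; ring
  · apply le_antisymm
    · rw [Ideal.span_singleton_le_span_singleton]
      exact dvd_pow_self x (by omega)
    · rw [Ideal.span_singleton_le_span_singleton]
      exact ⟨x, by rw [mul_comm, hx]⟩
end

section
/- Let A be a commutative von Neumann regular ring, a₁,…,aₙ a complete family of orthogonal idempotents of A, x₁,…,xₙ ∈ A, and b₁,…,bₙ idempotents of A with bᵢA = xᵢA for each i. Then ∑ᵢ aᵢbᵢ is an idempotent and (∑ᵢ aᵢbᵢ)A = (∑ᵢ aᵢxᵢ)A; that is, the map e sending each element to its associated idempotent commutes with convex combinations. -/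
theorem cfoi_sum_mul {A : Type*} [CommRing A] {n : ℕ} {a : Fin n → A} (ha : IsCFOI a)
    (u v : Fin n → A) :
    (∑ i, a i * u i) * (∑ i, a i * v i) = ∑ i, a i * (u i * v i) := by
  rw [Finset.sum_mul_sum]
  refine Finset.sum_congr rfl fun i _ => ?_
  rw [Finset.sum_eq_single i]
  · have h : a i * a i = a i := ha.1 i
    linear_combination (u i * v i) * h
  · intro j _ hj
    linear_combination (u i * v j) * ha.2.1 i j hj.symm
  · simp

theorem cfoi_sum_dvd {A : Type*} [CommRing A] {n : ℕ} {a : Fin n → A} (ha : IsCFOI a)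
    (u v : Fin n → A) (h : ∀ i, u i ∣ v i) :
    (∑ i, a i * u i) ∣ ∑ i, a i * v i := by
  choose c hc using h
  refine ⟨∑ i, a i * c i, ?_⟩
  rw [cfoi_sum_mul ha]
  exact Finset.sum_congr rfl fun i _ => by rw [hc i]

theorem stmt_14 (A : Type*) [CommRing A]
    (hreg : ∀ a : A, ∃ b : A, a = a ^ 2 * b)
    (n : ℕ) (a : Fin n → A) (ha : IsCFOI a) (x b : Fin n → A)
    (hb : ∀ i, IsIdempotentElem (b i))
    (hbx : ∀ i, Ideal.span {b i} = Ideal.span {x i}) :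
    IsIdempotentElem (∑ i, a i * b i) ∧
      Ideal.span {∑ i, a i * b i} = Ideal.span {∑ i, a i * x i} := by
  constructor
  · unfold IsIdempotentElem
    rw [cfoi_sum_mul ha]
    exact Finset.sum_congr rfl fun i _ => by rw [(hb i).eq]
  · apply le_antisymm
    · rw [Ideal.span_singleton_le_span_singleton]
      exact cfoi_sum_dvd ha _ _ fun i => Ideal.span_singleton_le_span_singleton.1 (hbx i).le
    · rw [Ideal.span_singleton_le_span_singleton]
      exact cfoi_sum_dvd ha _ _ fun i => Ideal.span_singleton_le_span_singleton.1 (hbx i).ge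
end

section
/- Let A be a nontrivial commutative reduced ring such that A/p is finite for every prime ideal p of A. Then the characteristic of A is a nonzero squarefree integer, i.e., char(A) = q₁⋯qₙ for distinct prime numbers q₁,…,qₙ. -/
theorem stmt_16 (A : Type*) [CommRing A] [IsReduced A] [Nontrivial A]
    (hfin : ∀ (p : Ideal A), p.IsPrime → Finite (A ⧸ p)) :
    ringChar A ≠ 0 ∧ ∃ (n : ℕ) (q : Fin n → ℕ),
      (∀ i, (q i).Prime) ∧ Function.Injective q ∧ ringChar A = ∏ i, q i := by
  have h0 : ringChar A ≠ 0 := by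
    intro h
    let S : Submonoid A := (nonZeroDivisors ℕ).map (Nat.castRingHom A)
    have hd : Disjoint ((⊥ : Ideal A) : Set A) (S : Set A) := by
      rw [Set.disjoint_left]
      rintro x hx ⟨n, hn, rfl⟩
      have hx0 : (n : A) = 0 := by simpa using hx
      have h1 := (ringChar.spec A n).1 hx0
      rw [h, zero_dvd_iff] at h1
      exact nonZeroDivisors.ne_zero hn h1
    obtain ⟨p, hp, -, hdis⟩ := Ideal.exists_le_prime_disjoint ⊥ S hd
    have := hfin p hp
    have hc : Nat.card (A ⧸ p) ≠ 0 := Nat.card_pos.ne'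
    have hz : ((Nat.card (A ⧸ p) : ℕ) : A ⧸ p) = 0 := by
      have := card_nsmul_eq_zero' (x := (1 : A ⧸ p))
      simpa using this
    have hm : ((Nat.card (A ⧸ p) : ℕ) : A) ∈ p := by
      rw [← Ideal.Quotient.eq_zero_iff_mem]
      simpa using hz
    exact Set.disjoint_left.1 hdis hm ⟨_, mem_nonZeroDivisors_of_ne_zero hc, rfl⟩
  have hsq : Squarefree (ringChar A) := by
    rintro d ⟨e, he⟩
    have hde : ((d * e : ℕ) : A) = 0 := by
      have h2 : ((d * e : ℕ) : A) ^ 2 = 0 := by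
        have h3 : ((ringChar A : ℕ) : A) = 0 := (ringChar.spec A _).2 dvd_rfl
        rw [he] at h3
        push_cast at h3 ⊢
        linear_combination (e : A) * h3
      exact pow_eq_zero_iff (two_ne_zero) |>.1 h2
    have h4 := (ringChar.spec A _).1 hde
    rw [he, mul_assoc] at h4
    have hne : d * e ≠ 0 := by
      rintro h5
      apply h0
      rw [he, mul_assoc, h5, mul_zero]
    have h6 := Nat.le_of_dvd (Nat.pos_of_ne_zero hne) h4
    have hd0 : d ≠ 0 := by rintro rfl; simp at hne
    have hpos := Nat.pos_of_ne_zero hne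
    rw [Nat.isUnit_iff]
    have : d ≤ 1 := by
      by_contra h7
      nlinarith
    omega
  refine ⟨h0, (ringChar A).primeFactors.card,
    fun i => ((ringChar A).primeFactors.equivFin.symm i : ℕ), ?_, ?_, ?_⟩
  · intro i
    exact Nat.prime_of_mem_primeFactors ((ringChar A).primeFactors.equivFin.symm i).2
  · exact Subtype.val_injective.comp (Equiv.injective _)
  · rw [Equiv.prod_comp (ringChar A).primeFactors.equivFin.symm (fun x => (x : ℕ)),
      Finset.prod_coe_sort (ringChar A).primeFactors (fun x => x)]
    exact (Nat.prod_primeFactors_of_squarefree hsq).symm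
end

section
/- Let K be the field with four elements and let A be the subring of the product ring K^ℕ consisting of all sequences x such that the set {n ∈ ℕ : x(n) ∉ {0,1}} is finite. Then A is von Neumann regular, and for every prime ideal p of A the quotient A/p is finite with |A/p| ≤ 4. -/
theorem aux_card_le_four (R : Type*) [CommRing R] [IsDomain R] (hq : ∀ y : R, y ^ 4 = y) :
    Finite R ∧ Nat.card R ≤ 4 := by
  classical
  let f : Polynomial R := Polynomial.X ^ 4 - Polynomial.X
  have hdeg : f.natDegree = 4 := by
    unfold f
    compute_degree!
  have hf : f ≠ 0 := by
    intro h
    rw [h] at hdeg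
    simp at hdeg
  have hmem : ∀ y : R, y ∈ f.roots.toFinset := by
    intro y
    rw [Multiset.mem_toFinset, Polynomial.mem_roots hf]
    simp [f, hq y]
  have hcard : f.roots.toFinset.card ≤ 4 :=
    (Multiset.toFinset_card_le _).trans ((Polynomial.card_roots' f).trans hdeg.le)
  let _ : Fintype R := ⟨f.roots.toFinset, hmem⟩
  refine ⟨inferInstance, ?_⟩
  rw [Nat.card_eq_fintype_card]
  exact hcard

theorem stmt_18 (K : Type*) [Field K] [Fintype K] (hK : Fintype.card K = 4)
    (A : Subring (ℕ → K))
    (hA : (A : Set (ℕ → K)) = {x | {n : ℕ | x n ∉ ({0, 1} : Set K)}.Finite}) :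
    (∀ a : A, ∃ b : A, a = a ^ 2 * b) ∧
      ∀ (p : Ideal A), p.IsPrime → Finite (A ⧸ p) ∧ Nat.card (A ⧸ p) ≤ 4 := by
  have h4 : ∀ a : A, a ^ 4 = a := by
    intro a
    apply Subtype.ext
    funext n
    have h := FiniteField.pow_card ((a : ℕ → K) n)
    rw [hK] at h
    simpa using h
  refine ⟨fun a => ⟨a ^ 2, ?_⟩, fun p hp => ?_⟩
  · rw [← pow_add]
    exact (h4 a).symm
  · apply aux_card_le_four
    intro y
    obtain ⟨a, rfl⟩ := Ideal.Quotient.mk_surjective y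
    rw [← map_pow, h4]
end

section
/- Let K be the field with four elements, fix a ∈ K with a ∉ {0,1}, and let A be the subring of the product ring K^ℕ consisting of all sequences x such that the set {n ∈ ℕ : x(n) ∉ {0,1}} is finite. Define f pointwise by f(x)(n) = x(n)·(x(n)+1)·(x(n)+a). Then f maps A into A, f satisfies f(x) − f(y) ∈ (x−y)A for all x, y ∈ A (i.e., f is contractive), but there is no polynomial F ∈ A[X] with F(x) = f(x) for all x ∈ A. -/
theorem stmt_19 (K : Type*) [Field K] [Fintype K] (hK : Fintype.card K = 4)
    (a : K) (ha : a ∉ ({0, 1} : Set K))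
    (A : Subring (ℕ → K))
    (hA : (A : Set (ℕ → K)) = {x | {n : ℕ | x n ∉ ({0, 1} : Set K)}.Finite}) :
    ∃ f : A → A,
      (∀ (x : A) (n : ℕ),
        (f x : ℕ → K) n = (x : ℕ → K) n * ((x : ℕ → K) n + 1) * ((x : ℕ → K) n + a)) ∧
      (∀ x y : A, f x - f y ∈ Ideal.span {x - y}) ∧
      ¬ ∃ F : Polynomial A, ∀ x : A, F.eval x = f x := by
  have h4 : (4 : K) = 0 := by
    have := Nat.cast_card_eq_zero K
    rw [hK] at this
    exact_mod_cast this
  have h2 : (2 : K) = 0 := by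
    have : (2 : K) * 2 = 0 := by rw [← h4]; norm_num
    simpa using this
  have : CharP K 2 := CharTwo.of_one_ne_zero_of_two_eq_zero one_ne_zero h2
  have ha0 : a ≠ 0 := fun h => ha (by simp [h])
  have ha1 : a - 1 ≠ 0 := fun h => ha (by simp [sub_eq_zero.mp h])
  have haa : a ^ 2 + a + 1 = 0 := by
    have h := FiniteField.pow_card a
    rw [hK] at h
    have : a * ((a - 1) * (a ^ 2 + a + 1)) = 0 := by linear_combination h
    simpa [ha0, ha1] using this
  have mem : ∀ x : ℕ → K, x ∈ A ↔ {n : ℕ | x n ∉ ({0, 1} : Set K)}.Finite := by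
    intro x
    rw [← SetLike.mem_coe, hA]; rfl
  have hz : ∀ t : K, t ∈ ({0, 1} : Set K) → t * (t + 1) * (t + a) = 0 := by
    rintro t (rfl | rfl)
    · simp
    · linear_combination (1 + a) * h2
  refine ⟨fun x => ⟨fun n => x.1 n * (x.1 n + 1) * (x.1 n + a), ?_⟩, fun _ _ => rfl, ?_, ?_⟩
  · rw [mem]
    refine ((mem _).1 x.2).subset ?_
    intro n hn hx
    exact hn (Or.inl (hz _ hx))
  · intro x y
    rw [Ideal.mem_span_singleton']
    refine ⟨⟨fun n => (x.1 n * (x.1 n + 1) * (x.1 n + a) - y.1 n * (y.1 n + 1) * (y.1 n + a))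
      / (x.1 n - y.1 n), ?_⟩, ?_⟩
    · rw [mem]
      refine (((mem _).1 x.2).union ((mem _).1 y.2)).subset ?_
      intro n hn
      by_contra hc
      simp only [Set.mem_union, Set.mem_ofPred_eq, not_or, not_not] at hc
      apply hn
      left
      rw [hz _ hc.1, hz _ hc.2]
      simp
    · apply Subtype.ext
      funext n
      change (x.1 n * (x.1 n + 1) * (x.1 n + a) - y.1 n * (y.1 n + 1) * (y.1 n + a))
        / (x.1 n - y.1 n) * (x.1 n - y.1 n) =
        x.1 n * (x.1 n + 1) * (x.1 n + a) - y.1 n * (y.1 n + 1) * (y.1 n + a)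
      by_cases h : x.1 n - y.1 n = 0
      · rw [sub_eq_zero.mp h]; simp
      · rw [div_mul_cancel₀ _ h]
  · rintro ⟨F, hF⟩
    obtain ⟨n, hn⟩ := (F.support.finite_toSet.biUnion
      (fun i _ => (mem _).1 (F.coeff i).2)).exists_notMem
    have hc : ∀ i, (F.coeff i).1 n ∈ ({0, 1} : Set K) := by
      intro i
      by_contra h
      apply hn
      simp only [Set.mem_iUnion]
      refine ⟨i, ?_, h⟩
      rw [Finset.mem_coe, Polynomial.mem_support_iff]
      intro h0
      apply h
      rw [h0]
      left; rfl
    let φ : A →+* K := (Pi.evalRingHom (fun _ : ℕ => K) n).comp A.subtype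
    have hg : ∀ t : K, (F.map φ).eval t = t * (t + 1) * (t + a) := by
      intro t
      have hm : (Pi.single n t : ℕ → K) ∈ A := by
        rw [mem]
        refine (Set.finite_singleton n).subset ?_
        intro m hm
        by_contra hne
        apply hm
        left
        exact Pi.single_eq_of_ne (M := fun _ : ℕ => K) hne t
      have hφ : φ ⟨Pi.single n t, hm⟩ = t := Pi.single_eq_same (M := fun _ : ℕ => K) n t
      have h1 := congrArg φ (hF ⟨Pi.single n t, hm⟩)
      rw [← Polynomial.eval₂_at_apply, hφ] at h1
      rw [Polynomial.eval_map, h1]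
      change (Pi.single n t : ℕ → K) n * ((Pi.single n t : ℕ → K) n + 1) *
        ((Pi.single n t : ℕ → K) n + a) = _
      rw [Pi.single_eq_same]
    have hfr : (F.map φ).map (frobenius K 2) = F.map φ := by
      ext i
      rw [Polynomial.coeff_map, Polynomial.coeff_map, frobenius_def]
      change (F.coeff i).1 n ^ 2 = (F.coeff i).1 n
      rcases hc i with h | h
      · rw [h]; simp
      · rw [Set.mem_singleton_iff.mp h]; simp
    have key := Polynomial.eval₂_at_apply (p := F.map φ) (frobenius K 2) a
    rw [← Polynomial.eval_map, hfr, hg, hg, frobenius_def, frobenius_def] at key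
    have e1 : a * (a + 1) * (a + a) = 0 := by linear_combination a * (a + 1) * a * h2
    have e2 : a ^ 2 = a + 1 := by linear_combination haa - (a + 1) * h2
    rw [e1, e2] at key
    have : (1 : K) = 0 := by
      linear_combination key - 7 * haa + (3 - a ^ 3) * h2
    exact one_ne_zero this
end
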